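/- arXiv:2102.10609 — 3 statements merged into one kernel-verified Lean document; each statement's English description precedes it below -/
import Mathlib

section
/- For every integer n ≥ 2, the set of unordered pairs {A, −A} with A ranging over the set 𝒪_n of orientation sign matrices of totally nonzero tuples v : {1,…,n} → ℝ² (i.e., the image of 𝒪_n under the map A ↦ {A, −A}) has cardinality 2^{n−2}·(n−1)!. -/
/-- The determinant of the 2×2 matrix with columns `v` and `w`. -/
noncomputable def det2 (v w : ℝ × ℝ) : ℝ := v.1 * w.2 - v.2 * w.1

/-- A tuple `v : Fin n → ℝ²` is totally nonzero if `det (v i | v j) ≠ 0` for all `i ≠ j`. -/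
def TotallyNonzero (n : ℕ) (v : Fin n → ℝ × ℝ) : Prop :=
  ∀ i j : Fin n, i ≠ j → det2 (v i) (v j) ≠ 0

/-- The orientation sign matrix of a tuple: `(O_v)_{ij} = sgn (det (v i | v j))`. -/
noncomputable def orientMatrix (n : ℕ) (v : Fin n → ℝ × ℝ) : Matrix (Fin n) (Fin n) ℝ :=
  Matrix.of fun i j => Real.sign (det2 (v i) (v j))

theorem det2_swap (v w : ℝ × ℝ) : det2 w v = -det2 v w := by
  simp only [det2]; ring

theorem norm_sq_mul_det2 (u v w : ℝ × ℝ) :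
    (u.1 ^ 2 + u.2 ^ 2) * det2 v w =
      (u.1 * v.1 + u.2 * v.2) * det2 u w - det2 u v * (u.1 * w.1 + u.2 * w.2) := by
  simp only [det2]; ring

theorem norm_sq_pos_of_det2_ne_zero {u v : ℝ × ℝ} (h : det2 u v ≠ 0) :
    0 < u.1 ^ 2 + u.2 ^ 2 := by
  by_contra hu
  have h1 : u.1 = 0 := by nlinarith [sq_nonneg u.1, sq_nonneg u.2]
  have h2 : u.2 = 0 := by nlinarith [sq_nonneg u.1, sq_nonneg u.2]
  simp [det2, h1, h2] at h

theorem sign_mul_real (a b : ℝ) : Real.sign (a * b) = Real.sign a * Real.sign b := by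
  rcases lt_trichotomy a 0 with ha | rfl | ha <;> rcases lt_trichotomy b 0 with hb | rfl | hb <;>
    simp [Real.sign_of_neg, Real.sign_of_pos, mul_pos_of_neg_of_neg, mul_neg_of_neg_of_pos,
      mul_neg_of_pos_of_neg, *]

theorem sign_sub_eq_sign_sub {a b c d : ℝ} (h₁ : a < b ↔ c < d) (h₂ : b < a ↔ d < c) :
    Real.sign (b - a) = Real.sign (d - c) := by
  rcases lt_trichotomy a b with h | h | h
  · rw [Real.sign_of_pos (sub_pos.2 h), Real.sign_of_pos (sub_pos.2 (h₁.1 h))]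
  · subst h
    have : c = d := le_antisymm (not_lt.1 fun k => lt_irrefl _ (h₂.2 k))
      (not_lt.1 fun k => lt_irrefl _ (h₁.2 k))
    simp [this]
  · rw [Real.sign_of_neg (sub_neg.2 h), Real.sign_of_neg (sub_neg.2 (h₂.1 h))]

/-- The real number `1` or `-1` encoded by a Boolean. -/
noncomputable def boolSign (b : Bool) : ℝ := if b then 1 else -1

theorem sign_boolSign (b : Bool) : Real.sign (boolSign b) = boolSign b := by
  cases b <;> simp [boolSign, Real.sign_neg]

theorem boolSign_ne_zero (b : Bool) : boolSign b ≠ 0 := by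
  cases b <;> simp [boolSign]

theorem boolSign_injective : Function.Injective boolSign := by
  intro a b h
  cases a <;> cases b <;> simp [boolSign] at h ⊢ <;> norm_num at h

/-- The tuple `(1, 0), ±(-σ 0, 1), …, ±(-σ (m - 1), 1)`, with signs given by `e`. -/
noncomputable def normalTuple {m : ℕ} (e : Fin m → Bool) (σ : Equiv.Perm (Fin m)) :
    Fin (m + 1) → ℝ × ℝ :=
  Fin.cons (1, 0) fun j => (-(boolSign (e j) * (σ j : ℕ)), boolSign (e j))

theorem det2_normalTuple_zero_succ {m : ℕ} (e : Fin m → Bool) (σ : Equiv.Perm (Fin m))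
    (j : Fin m) : det2 (normalTuple e σ 0) (normalTuple e σ j.succ) = boolSign (e j) := by
  simp [normalTuple, det2]

theorem det2_normalTuple_succ_succ {m : ℕ} (e : Fin m → Bool) (σ : Equiv.Perm (Fin m))
    (i j : Fin m) : det2 (normalTuple e σ i.succ) (normalTuple e σ j.succ) =
      boolSign (e i) * boolSign (e j) * (((σ j : ℕ) : ℝ) - (σ i : ℕ)) := by
  simp only [normalTuple, det2, Fin.cons_succ]; ring

theorem totallyNonzero_normalTuple {m : ℕ} (e : Fin m → Bool) (σ : Equiv.Perm (Fin m)) :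
    TotallyNonzero (m + 1) (normalTuple e σ) := by
  intro i j hij
  induction i using Fin.cases with
  | zero =>
    induction j using Fin.cases with
    | zero => exact absurd rfl hij
    | succ j => rw [det2_normalTuple_zero_succ]; exact boolSign_ne_zero _
  | succ i =>
    induction j using Fin.cases with
    | zero =>
      rw [det2_swap, det2_normalTuple_zero_succ]; exact neg_ne_zero.2 (boolSign_ne_zero _)
    | succ j =>
      rw [det2_normalTuple_succ_succ]
      refine mul_ne_zero (mul_ne_zero (boolSign_ne_zero _) (boolSign_ne_zero _)) ?_
      rw [sub_ne_zero, Nat.cast_injective.ne_iff, Fin.val_injective.ne_iff, σ.injective.ne_iff]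
      rintro rfl
      exact hij rfl

/-- An orientation sign matrix is determined by its first row and the block after it. -/
theorem orientMatrix_ext {m : ℕ} {v w : Fin (m + 1) → ℝ × ℝ}
    (h₀ : ∀ j : Fin m, Real.sign (det2 (v 0) (v j.succ)) = Real.sign (det2 (w 0) (w j.succ)))
    (h₁ : ∀ i j : Fin m,
      Real.sign (det2 (v i.succ) (v j.succ)) = Real.sign (det2 (w i.succ) (w j.succ))) :
    orientMatrix (m + 1) v = orientMatrix (m + 1) w := by
  ext i j
  simp only [orientMatrix, Matrix.of_apply]
  induction i using Fin.cases with
  | zero =>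
    induction j using Fin.cases with
    | zero => simp [det2, mul_comm]
    | succ j => exact h₀ j
  | succ i =>
    induction j using Fin.cases with
    | zero =>
      rw [det2_swap (v 0), det2_swap (w 0), Real.sign_neg, Real.sign_neg, h₀ i]
    | succ j => exact h₁ i j

theorem exists_perm_lt_iff_lt {m : ℕ} {t : Fin m → ℝ} (ht : Function.Injective t) :
    ∃ σ : Equiv.Perm (Fin m), ∀ i j, σ i < σ j ↔ t i < t j := by
  have hs : StrictMono (t ∘ Tuple.sort t) :=
    (Tuple.monotone_sort t).strictMono_of_injective (ht.comp (Tuple.sort t).injective)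
  refine ⟨(Tuple.sort t).symm, fun i j => ?_⟩
  simpa using (hs.lt_iff_lt (a := (Tuple.sort t).symm i) (b := (Tuple.sort t).symm j)).symm

theorem orientMatrix_eq_normalTuple {m : ℕ} {v : Fin (m + 1) → ℝ × ℝ}
    (hv : TotallyNonzero (m + 1) v) :
    ∃ (e : Fin m → Bool) (σ : Equiv.Perm (Fin m)),
      orientMatrix (m + 1) v = orientMatrix (m + 1) (normalTuple e σ) := by
  set d : Fin m → ℝ := fun j => det2 (v 0) (v j.succ) with hd
  have hd0 (j) : d j ≠ 0 := hv 0 j.succ (Fin.succ_ne_zero j).symm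
  set t : Fin m → ℝ := fun j =>
    -((v 0).1 * (v j.succ).1 + (v 0).2 * (v j.succ).2) / d j with ht
  have key (i j : Fin m) : ((v 0).1 ^ 2 + (v 0).2 ^ 2) * det2 (v i.succ) (v j.succ) =
      d i * d j * (t j - t i) := by
    rw [norm_sq_mul_det2]
    have := hd0 i
    have := hd0 j
    simp only [ht]
    field_simp
    simp only [hd]
    ring
  have hpos (j : Fin m) : 0 < (v 0).1 ^ 2 + (v 0).2 ^ 2 := norm_sq_pos_of_det2_ne_zero (hd0 j)
  have ht_inj : Function.Injective t := by
    intro i j hij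
    by_contra hne
    have h := key i j
    rw [hij, sub_self, mul_zero] at h
    exact mul_ne_zero (hpos i).ne' (hv _ _ ((Fin.succ_injective m).ne hne)) h
  obtain ⟨σ, hσ⟩ := exists_perm_lt_iff_lt ht_inj
  have he (j : Fin m) : Real.sign (d j) = boolSign (decide (0 < d j)) := by
    rcases (hd0 j).lt_or_gt with h | h
    · simp [boolSign, Real.sign_of_neg h, h.not_gt]
    · simp [boolSign, Real.sign_of_pos h, h]
  refine ⟨fun j => decide (0 < d j), σ, orientMatrix_ext (fun j => ?_) fun i j => ?_⟩
  · rw [det2_normalTuple_zero_succ, sign_boolSign]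
    exact he j
  · have h := congrArg Real.sign (key i j)
    rw [sign_mul_real, Real.sign_of_pos (hpos i), one_mul, sign_mul_real, sign_mul_real] at h
    rw [h, det2_normalTuple_succ_succ, sign_mul_real, sign_mul_real, sign_boolSign,
      sign_boolSign, he, he]
    congr 1
    apply sign_sub_eq_sign_sub <;> simp [hσ]

theorem orientMatrix_normalTuple_zero_succ {m : ℕ} (e : Fin m → Bool)
    (σ : Equiv.Perm (Fin m)) (j : Fin m) :
    orientMatrix (m + 1) (normalTuple e σ) 0 j.succ = boolSign (e j) := by
  simp only [orientMatrix, Matrix.of_apply]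
  rw [det2_normalTuple_zero_succ, sign_boolSign]

theorem perm_eq_of_lt_imp_lt {m : ℕ} {σ τ : Equiv.Perm (Fin m)}
    (h : ∀ i j, σ i < σ j → τ i < τ j) : σ = τ := by
  have hm : StrictMono (σ.symm.trans τ) := fun a b hab => by
    simpa using h (σ.symm a) (σ.symm b) (by simpa using hab)
  have hid : σ.symm.trans τ = Equiv.refl _ := (Equiv.Perm.monotone_iff _).1 hm.monotone
  ext i
  simpa using (congrArg Fin.val (Equiv.congr_fun hid (σ i))).symm

theorem orientMatrix_normalTuple_injective {m : ℕ} {e e' : Fin m → Bool}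
    {σ σ' : Equiv.Perm (Fin m)}
    (h : orientMatrix (m + 1) (normalTuple e σ) = orientMatrix (m + 1) (normalTuple e' σ')) :
    e = e' ∧ σ = σ' := by
  have he : e = e' := by
    funext j
    apply boolSign_injective
    rw [← orientMatrix_normalTuple_zero_succ e σ, h, orientMatrix_normalTuple_zero_succ]
  subst he
  refine ⟨rfl, perm_eq_of_lt_imp_lt fun i j hij => ?_⟩
  have hs := congrFun (congrFun h i.succ) j.succ
  simp only [orientMatrix, Matrix.of_apply, det2_normalTuple_succ_succ, sign_mul_real,
    sign_boolSign] at hs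
  have hs' := mul_left_cancel₀ (mul_ne_zero (boolSign_ne_zero _) (boolSign_ne_zero _)) hs
  have hpos : (0 : ℝ) < ((σ j : ℕ) : ℝ) - (σ i : ℕ) := by simpa using hij
  rw [Real.sign_of_pos hpos] at hs'
  by_contra hle
  rcases (not_lt.1 hle).lt_or_eq with hlt | heq
  · rw [Real.sign_of_neg (by simpa using hlt)] at hs'
    norm_num at hs'
  · simp [heq] at hs'

theorem neg_orientMatrix (n : ℕ) (v : Fin n → ℝ × ℝ) :
    -orientMatrix n v = orientMatrix n fun i => ((v i).1, -(v i).2) := by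
  ext i j
  simp only [orientMatrix, Matrix.neg_apply, Matrix.of_apply, ← Real.sign_neg, det2]
  congr 1
  ring

theorem TotallyNonzero.reflect {n : ℕ} {v : Fin n → ℝ × ℝ} (hv : TotallyNonzero n v) :
    TotallyNonzero n fun i => ((v i).1, -(v i).2) := by
  intro i j hij h
  apply hv i j hij
  simp only [det2] at h ⊢
  linarith

theorem image_pair_eq_range (k : ℕ) :
    (fun A => ({A, -A} : Set (Matrix (Fin (k + 2)) (Fin (k + 2)) ℝ))) ''
        {A : Matrix (Fin (k + 2)) (Fin (k + 2)) ℝ |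
          ∃ v : Fin (k + 2) → ℝ × ℝ, TotallyNonzero (k + 2) v ∧ A = orientMatrix (k + 2) v} =
      Set.range fun p : (Fin k → Bool) × Equiv.Perm (Fin (k + 1)) =>
        ({orientMatrix (k + 2) (normalTuple (Fin.cons true p.1) p.2),
          -orientMatrix (k + 2) (normalTuple (Fin.cons true p.1) p.2)} : Set _) := by
  have of_true (e : Fin (k + 1) → Bool) (h : e 0 = true) : Fin.cons true (Fin.tail e) = e := by
    rw [← h, Fin.cons_self_tail]
  apply Set.Subset.antisymm
  · rintro _ ⟨_, ⟨v, hv, rfl⟩, rfl⟩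
    obtain ⟨e, σ, h⟩ := orientMatrix_eq_normalTuple hv
    obtain ⟨e', σ', h'⟩ := orientMatrix_eq_normalTuple hv.reflect
    rw [← neg_orientMatrix] at h'
    cases h0 : e 0
    · have h0' : e' 0 = true := by
        apply boolSign_injective
        rw [← orientMatrix_normalTuple_zero_succ e' σ', ← h', h, Matrix.neg_apply,
          orientMatrix_normalTuple_zero_succ, h0]
        simp [boolSign]
      refine ⟨(Fin.tail e', σ'), ?_⟩
      simp only [of_true e' h0', ← h', neg_neg]
      exact Set.pair_comm _ _
    · exact ⟨(Fin.tail e, σ), by simp only [of_true e h0, ← h]⟩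
  · rintro _ ⟨p, rfl⟩
    exact ⟨_, ⟨_, totallyNonzero_normalTuple _ _, rfl⟩, rfl⟩

theorem pair_orientMatrix_normalTuple_injective (k : ℕ) :
    Function.Injective fun p : (Fin k → Bool) × Equiv.Perm (Fin (k + 1)) =>
      ({orientMatrix (k + 2) (normalTuple (Fin.cons true p.1) p.2),
        -orientMatrix (k + 2) (normalTuple (Fin.cons true p.1) p.2)} : Set _) := by
  rintro ⟨e, σ⟩ ⟨e', σ'⟩ h
  rcases Set.pair_eq_pair_iff.1 h with ⟨h, -⟩ | ⟨h, -⟩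
  · obtain ⟨he, hσ⟩ := orientMatrix_normalTuple_injective h
    rw [Prod.mk.injEq]
    exact ⟨Fin.cons_right_injective (α := fun _ => Bool) true he, hσ⟩
  · have h01 := congrFun (congrFun h 0) (Fin.succ 0)
    rw [Matrix.neg_apply, orientMatrix_normalTuple_zero_succ,
      orientMatrix_normalTuple_zero_succ] at h01
    norm_num [boolSign] at h01

/-- for `n ≥ 2`, the image of `𝒪_n` under `A ↦ {A, -A}` has cardinality
`2^(n-2) · (n-1)!`. -/
theorem stmt_4 (n : ℕ) (hn : 2 ≤ n) :
    ((fun A => ({A, -A} : Set (Matrix (Fin n) (Fin n) ℝ))) ''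
        {A : Matrix (Fin n) (Fin n) ℝ |
          ∃ v : Fin n → ℝ × ℝ, TotallyNonzero n v ∧ A = orientMatrix n v}).ncard =
      2 ^ (n - 2) * Nat.factorial (n - 1) := by
  obtain ⟨k, rfl⟩ := Nat.exists_eq_add_of_le' hn
  rw [image_pair_eq_range, ← Set.image_univ,
    Set.ncard_image_of_injective _ (pair_orientMatrix_normalTuple_injective k), Set.ncard_univ,
    Nat.card_eq_fintype_card]
  simp [Fintype.card_perm]
end

section
/- Let n ≥ m ≥ 2 be integers and let M, N ∈ Mat^{tnz}_{mn}(ℝ) have columns v_1,…,v_n and w_1,…,w_n respectively, so that S = {±v_1,…,±v_n} and T = {±w_1,…,±w_n} are antipodal point arrangements of cardinality 2n in ℝ^m. Then S and T are isomorphic antipodal point arrangements if and only if there exist a permutation σ of {1,…,n}, signs ε : {1,…,n} → {1,−1}, and a sign δ ∈ {1,−1} such that for every m-element subset I ⊆ {1,…,n}, sgn(Δ_I(M)) = δ·sgn(Δ_I(N')), where N' denotes the m×n matrix whose i-th column is ε_i·w_{σ(i)}. -/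
/-- The maximal minor `Δ_I(M)`: the determinant of the `m × m` submatrix of `M` on the column
set `I` (columns taken in increasing order). -/
noncomputable def maxMinor {m n : ℕ} (M : Matrix (Fin m) (Fin n) ℝ)
    (I : Finset (Fin n)) (hI : I.card = m) : ℝ :=
  (M.submatrix id (fun k => ((I.orderIsoOfFin hI k : I) : Fin n))).det

/-- `Mat^{tnz}_{mn}(ℝ)`: all maximal minors are nonzero. -/
def TNZMat {m n : ℕ} (M : Matrix (Fin m) (Fin n) ℝ) : Prop :=
  ∀ (I : Finset (Fin n)) (hI : I.card = m), maxMinor M I hI ≠ 0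

/-- The antipodal point arrangement `{±v_1, …, ±v_n}` associated to the columns of `M`. -/
def antipodalSet {m n : ℕ} (M : Matrix (Fin m) (Fin n) ℝ) : Set (Fin m → ℝ) :=
  (Set.range fun i => fun k => M k i) ∪ (Set.range fun i => fun k => -M k i)

/-- Isomorphism of antipodal point arrangements `S, T ⊆ ℝ^m`: a bijection `f : S → T` with
`f (-v) = -f v`, such that for every `(m+1)`-element subset `{c 0, …, c m}` of `S` containing
no antipodal pair, whenever `c m = Σ_j a j • c j` and `f (c m) = Σ_j b j • f (c j)`, one has
`(∀ j, a j > 0) ↔ (∀ j, b j > 0)`. -/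
def AntipodalIso (m : ℕ) (S T : Set (Fin m → ℝ)) : Prop :=
  ∃ f : (Fin m → ℝ) → (Fin m → ℝ), Set.BijOn f S T ∧
    (∀ v ∈ S, f (-v) = -f v) ∧
    ∀ c : Fin (m + 1) → (Fin m → ℝ), Function.Injective c → (∀ k, c k ∈ S) →
      (∀ k l, c k ≠ -c l) →
      ∀ a b : Fin m → ℝ,
        c (Fin.last m) = ∑ j : Fin m, a j • c j.castSucc →
        f (c (Fin.last m)) = ∑ j : Fin m, b j • f (c j.castSucc) →
        ((∀ j, 0 < a j) ↔ (∀ j, 0 < b j)) 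

open Function

/-- The determinant of the square matrix with rows `v (t 0), …, v (t (m - 1))`. -/
noncomputable def tupleDet {m : ℕ} {ι : Type*} (v : ι → Fin m → ℝ) (t : Fin m → ι) : ℝ :=
  (Matrix.of fun j => v (t j)).det

/-- The vectors `± v i`, indexed by `i` and a sign. -/
noncomputable def signedVec {m : ℕ} {ι : Type*} (v : ι → Fin m → ℝ) (p : ι × ℤˣ) : Fin m → ℝ :=
  ((p.2 : ℤ) : ℝ) • v p.1

/-- Any `m` of the vectors `v i` are linearly independent. -/
def GeneralPosition {m : ℕ} {ι : Type*} (v : ι → Fin m → ℝ) : Prop :=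
  ∀ t : Fin m → ι, Injective t → tupleDet v t ≠ 0

/-- Signed vectors lie in the open cones spanned by `m` others simultaneously for `v` and `w`. -/
def SameCones {m : ℕ} {ι : Type*} (v w : ι → Fin m → ℝ) : Prop :=
  ∀ p : Fin (m + 1) → ι × ℤˣ, Injective (fun k => (p k).1) → ∀ a b : Fin m → ℝ,
    signedVec v (p (Fin.last m)) = ∑ j, a j • signedVec v (p j.castSucc) →
    signedVec w (p (Fin.last m)) = ∑ j, b j • signedVec w (p j.castSucc) →
    ((∀ j, 0 < a j) ↔ ∀ j, 0 < b j)

section TupleDet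

variable {m : ℕ} {ι : Type*} (v w : ι → Fin m → ℝ)

theorem tupleDet_comp_perm (t : Fin m → ι) (π : Equiv.Perm (Fin m)) :
    tupleDet v (t ∘ π) = (Equiv.Perm.sign π : ℤ) * tupleDet v t :=
  Matrix.det_permute π (Matrix.of fun j => v (t j))

theorem tupleDet_signedVec (p : Fin m → ι × ℤˣ) :
    tupleDet (signedVec v) p = (∏ j, (((p j).2 : ℤ) : ℝ)) * tupleDet v (fun j => (p j).1) :=
  Matrix.det_mul_column (fun j => (((p j).2 : ℤ) : ℝ)) (Matrix.of fun j => v (p j).1)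

theorem tupleDet_update [DecidableEq ι] (t : Fin m → ι) (k : ι) (a : Fin m → ℝ)
    (h : v k = ∑ l, a l • v (t l)) (j : Fin m) :
    tupleDet v (update t j k) = a j * tupleDet v t := by
  have := Matrix.det_updateRow_sum (Matrix.of fun j => v (t j)) j a
  rw [smul_eq_mul] at this
  rw [tupleDet, tupleDet, ← this]
  congr 1
  ext l i
  by_cases hl : l = j
  · subst hl
    simpa using congrFun h i
  · simp [hl]

variable {v w}

theorem linearIndependent_of_tupleDet_ne_zero {t : Fin m → ι} (h : tupleDet v t ≠ 0) :
    LinearIndependent ℝ (fun j => v (t j)) :=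
  Matrix.linearIndependent_rows_iff_isUnit.2
    ((Matrix.isUnit_iff_isUnit_det (Matrix.of fun j => v (t j))).2 h.isUnit)

theorem exists_eq_sum_of_tupleDet_ne_zero {t : Fin m → ι} (h : tupleDet v t ≠ 0)
    (x : Fin m → ℝ) : ∃ a : Fin m → ℝ, x = ∑ l, a l • v (t l) := by
  have hspan := (linearIndependent_of_tupleDet_ne_zero h).span_eq_top_of_card_eq_finrank' (by simp)
  have hx : x ∈ Submodule.span ℝ (Set.range fun j => v (t j)) := hspan ▸ Submodule.mem_top
  obtain ⟨a, ha⟩ := (Submodule.mem_span_range_iff_exists_fun ℝ).1 hx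
  exact ⟨a, ha.symm⟩

theorem pos_unit_mul_iff (s : ℤˣ) (x y : ℝ) :
    0 < ((s : ℤ) : ℝ) * x * (((s : ℤ) : ℝ) * y) ↔ 0 < x * y := by
  rcases Int.units_eq_one_or s with rfl | rfl <;> simp

theorem tupleDet_comp_perm_mul_pos_iff (δ : ℝ) (t : Fin m → ι) (π : Equiv.Perm (Fin m)) :
    0 < δ * (tupleDet v (t ∘ π) * tupleDet w (t ∘ π)) ↔
      0 < δ * (tupleDet v t * tupleDet w t) := by
  rw [tupleDet_comp_perm, tupleDet_comp_perm]
  rcases Int.units_eq_one_or (Equiv.Perm.sign π) with h | h <;> simp [h]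

theorem tupleDet_signedVec_mul_pos_iff (δ : ℝ) (p : Fin m → ι × ℤˣ) :
    0 < δ * (tupleDet (signedVec v) p * tupleDet (signedVec w) p) ↔
      0 < δ * (tupleDet v (fun j => (p j).1) * tupleDet w (fun j => (p j).1)) := by
  rw [tupleDet_signedVec, tupleDet_signedVec]
  have h : ∏ j, (((p j).2 : ℤ) : ℝ) = ((∏ j, (p j).2 : ℤˣ) : ℤ) := by push_cast; rfl
  rw [h]
  rcases Int.units_eq_one_or (∏ j, (p j).2) with h | h <;> simp [h]

end TupleDet

theorem exists_perm_of_range_subset {m : ℕ} {ι : Type*} {t t' : Fin m → ι} (ht : Injective t)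
    (h : ∀ j, ∃ k, t' k = t j) : ∃ π : Equiv.Perm (Fin m), t = t' ∘ π := by
  choose g hg using h
  have hinj : Injective g := fun a b hab => ht (by rw [← hg a, ← hg b, hab])
  exact ⟨Equiv.ofBijective g (Finite.injective_iff_bijective.1 hinj), funext fun j => (hg j).symm⟩

theorem update_injective_of_notMem_range {m : ℕ} {ι : Type*} [DecidableEq ι] {t : Fin m → ι}
    (ht : Injective t) (j : Fin m) {k : ι} (hk : k ∉ Set.range t) : Injective (update t j k) := by
  intro x y hxy
  by_cases hx : x = j <;> by_cases hy : y = j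
  · rw [hx, hy]
  · subst hx
    rw [update_self, update_of_ne hy] at hxy
    exact absurd ⟨y, hxy.symm⟩ hk
  · subst hy
    rw [update_self, update_of_ne hx] at hxy
    exact absurd ⟨x, hxy⟩ hk
  · rw [update_of_ne hx, update_of_ne hy] at hxy
    exact ht hxy

/-- A property of injective tuples that is stable under permutations and under exchanging one
entry for a new one holds for all of them as soon as it holds for one. -/
theorem injective_tuple_exchange_induction {m : ℕ} {ι : Type*} [DecidableEq ι]
    {Q : (Fin m → ι) → Prop} (hperm : ∀ t (π : Equiv.Perm (Fin m)), Q (t ∘ π) → Q t)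
    (hexch : ∀ t, Injective t → ∀ j k, k ∉ Set.range t → Q t → Q (update t j k))
    {t t' : Fin m → ι} (ht : Injective t) (ht' : Injective t') (hQ : Q t) : Q t' := by
  induction hd : (Finset.univ.filter fun j => t j ∉ Set.range t').card using
    Nat.strong_induction_on generalizing t with
  | _ d ih =>
    by_cases hall : ∀ j, ∃ k, t' k = t j
    · obtain ⟨π, rfl⟩ := exists_perm_of_range_subset ht hall
      exact hperm _ _ hQ
    · push Not at hall
      obtain ⟨j, hj⟩ := hall
      obtain ⟨k, hk⟩ : ∃ k, t' k ∉ Set.range t := by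
        by_contra! hcon
        obtain ⟨π, rfl⟩ := exists_perm_of_range_subset ht' hcon
        exact hj (π.symm j) (by simp)
      refine ih _ ?_ (update_injective_of_notMem_range ht j hk) (hexch t ht j _ hk hQ) rfl
      rw [← hd]
      refine Finset.card_lt_card (Finset.ssubset_iff_of_subset ?_ |>.2 ⟨j, ?_, ?_⟩)
      · intro x hx
        by_cases hxj : x = j
        · subst hxj
          simpa using hj
        · simpa [hxj] using hx
      · simpa using hj
      · simp

section SameCones

variable {m : ℕ} {ι : Type*} {v w : ι → Fin m → ℝ}

theorem exists_unit_mul_pos {x : ℝ} (hx : x ≠ 0) : ∃ s : ℤˣ, 0 < ((s : ℤ) : ℝ) * x := by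
  rcases hx.lt_or_gt with h | h
  · exact ⟨-1, by simpa using h⟩
  · exact ⟨1, by simpa using h⟩

theorem unit_mul_self_real (s : ℤˣ) : ((s : ℤ) : ℝ) * ((s : ℤ) : ℝ) = 1 := by
  rcases Int.units_eq_one_or s with rfl | rfl <;> simp

/-- Under `SameCones`, coefficients of corresponding linear dependencies have equal signs. -/
theorem SameCones.mul_pos (h : SameCones v w) {t : Fin m → ι} (ht : Injective t) {k : ι}
    (hk : k ∉ Set.range t) {a b : Fin m → ℝ} (ha0 : ∀ j, a j ≠ 0)
    (ha : v k = ∑ l, a l • v (t l)) (hb : w k = ∑ l, b l • w (t l)) (j : Fin m) :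
    0 < a j * b j := by
  choose s hs using fun l => exists_unit_mul_pos (ha0 l)
  have key := h (Fin.snoc (fun l => (t l, s l)) (k, 1)) ?_
    (fun l => ((s l : ℤ) : ℝ) * a l) (fun l => ((s l : ℤ) : ℝ) * b l) ?_ ?_
  · rw [← pos_unit_mul_iff (s j)]
    exact _root_.mul_pos (hs j) (key.1 hs j)
  · have : (fun l => (Fin.snoc (α := fun _ => ι × ℤˣ) (fun l => (t l, s l)) (k, 1) l).1) =
        Fin.snoc (α := fun _ => ι) t k := by
      funext l
      refine Fin.lastCases ?_ (fun l => ?_) l <;> simp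
    rw [this, Fin.snoc_injective_iff]
    exact ⟨ht, hk⟩
  · simp only [Fin.snoc_last, Fin.snoc_castSucc, signedVec, smul_smul]
    simp [mul_right_comm _ (a _), unit_mul_self_real, ha]
  · simp only [Fin.snoc_last, Fin.snoc_castSucc, signedVec, smul_smul]
    simp [mul_right_comm _ (b _), unit_mul_self_real, hb]

theorem SameCones.exists_sign (hv : GeneralPosition v) (hw : GeneralPosition w)
    (h : SameCones v w) {t₀ : Fin m → ι} (ht₀ : Injective t₀) :
    ∃ δ : ℝ, (δ = 1 ∨ δ = -1) ∧
      ∀ t, Injective t → 0 < δ * (tupleDet v t * tupleDet w t) := by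
  classical
  obtain ⟨s, hs⟩ := exists_unit_mul_pos (mul_ne_zero (hv t₀ ht₀) (hw t₀ ht₀))
  refine ⟨((s : ℤ) : ℝ), ?_, fun t ht => ?_⟩
  · rcases Int.units_eq_one_or s with rfl | rfl <;> simp
  refine injective_tuple_exchange_induction
    (Q := fun t => 0 < ((s : ℤ) : ℝ) * (tupleDet v t * tupleDet w t))
    (fun t π => (tupleDet_comp_perm_mul_pos_iff _ t π).1) ?_ ht₀ ht hs
  intro t ht j k hk hQ
  obtain ⟨a, ha⟩ := exists_eq_sum_of_tupleDet_ne_zero (hv t ht) (v k)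
  obtain ⟨b, hb⟩ := exists_eq_sum_of_tupleDet_ne_zero (hw t ht) (w k)
  have ha0 : ∀ l, a l ≠ 0 := fun l hl =>
    hv _ (update_injective_of_notMem_range ht l hk) (by rw [tupleDet_update v t k a ha, hl, zero_mul])
  have hab := h.mul_pos ht hk ha0 ha hb j
  rw [tupleDet_update v t k a ha, tupleDet_update w t k b hb]
  nlinarith [_root_.mul_pos hab hQ]

theorem sameCones_of_sign {δ : ℝ}
    (h : ∀ t, Injective t → 0 < δ * (tupleDet v t * tupleDet w t)) : SameCones v w := by
  classical
  intro p hp a b ha hb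
  have hlast : ∀ x : Fin m, (p x.castSucc).1 ≠ (p (Fin.last m)).1 := fun x hx =>
    (Fin.castSucc_lt_last x).ne (hp hx)
  have hpos := (tupleDet_signedVec_mul_pos_iff (v := v) (w := w) δ fun j => p j.castSucc).2
    (h _ (hp.comp (Fin.castSucc_injective m)))
  have hab : ∀ j, 0 < a j * b j := by
    intro j
    have hupd := (tupleDet_signedVec_mul_pos_iff (v := v) (w := w) δ
      (update (fun j => p j.castSucc) j (p (Fin.last m)))).2 (h _ ?_)
    · rw [tupleDet_update _ _ _ a ha, tupleDet_update _ _ _ b hb] at hupd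
      by_contra! hcon
      nlinarith [mul_nonneg (neg_nonneg.2 hcon) hpos.le]
    · have : (fun l => (update (fun j : Fin m => p j.castSucc) j (p (Fin.last m)) l).1) =
          update (fun j : Fin m => (p j.castSucc).1) j (p (Fin.last m)).1 := by
        funext l
        by_cases hl : l = j
        · subst hl; simp
        · simp [hl]
      rw [this]
      exact update_injective_of_notMem_range (hp.comp (Fin.castSucc_injective m)) j
        (fun ⟨x, hx⟩ => hlast x hx)
  exact forall_congr' fun j =>
    ⟨fun haj => (pos_iff_pos_of_mul_pos (hab j)).1 haj,
      fun hbj => (pos_iff_pos_of_mul_pos (hab j)).2 hbj⟩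

end SameCones

section Arrangement

variable {m n : ℕ} {v w u : Fin n → Fin m → ℝ}

theorem signedVec_neg (v : Fin n → Fin m → ℝ) (i : Fin n) (s : ℤˣ) :
    signedVec v (i, -s) = -signedVec v (i, s) := by
  simp [signedVec]

theorem GeneralPosition.signedVec_injective (hm : 2 ≤ m) (hmn : m ≤ n) (hv : GeneralPosition v) :
    Injective (signedVec v) := by
  rintro ⟨i, s⟩ ⟨k, s'⟩ h
  obtain ⟨I, hI, hcard⟩ := Finset.exists_superset_card_eq (s := {i, k}) (n := m)
    (Finset.card_le_two.trans hm) (by simpa using hmn)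
  have hli := linearIndependent_of_tupleDet_ne_zero
    (hv (I.orderEmbOfFin hcard) (I.orderEmbOfFin hcard).injective)
  have hrange : Set.range (I.orderEmbOfFin hcard) = I := I.range_orderEmbOfFin hcard
  obtain ⟨x, hx⟩ : i ∈ Set.range (I.orderEmbOfFin hcard) := hrange ▸ hI (by simp)
  obtain ⟨y, hy⟩ : k ∈ Set.range (I.orderEmbOfFin hcard) := hrange ▸ hI (by simp)
  have hvi : v i ≠ 0 := by simpa [hx] using hli.ne_zero x
  have hxy : x = y := hli.eq_of_smul_apply_eq_smul_apply ((s : ℤ) : ℝ) ((s' : ℤ) : ℝ) x y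
    (by simp) (by simpa [signedVec, hx, hy] using h)
  have hik : i = k := by rw [← hx, ← hy, hxy]
  subst hik
  rcases Int.units_eq_one_or s with rfl | rfl <;> rcases Int.units_eq_one_or s' with rfl | rfl <;>
    simp [signedVec, self_eq_neg, neg_eq_self, hvi] at h ⊢

theorem range_signedVec_signedVec (u : Fin n → Fin m → ℝ) (σ : Equiv.Perm (Fin n))
    (e : Fin n → ℤˣ) :
    Set.range (signedVec fun i => signedVec u (σ i, e i)) = Set.range (signedVec u) := by
  ext x
  constructor
  · rintro ⟨⟨i, s⟩, rfl⟩
    exact ⟨(σ i, s * e i), by simp [signedVec, smul_smul]⟩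
  · rintro ⟨⟨i, s⟩, rfl⟩
    exact ⟨(σ.symm i, s * e (σ.symm i)), by
      simp [signedVec, smul_smul, mul_assoc, unit_mul_self_real]⟩

theorem GeneralPosition.signedVec_comp_perm (hu : GeneralPosition u) (σ : Equiv.Perm (Fin n))
    (e : Fin n → ℤˣ) : GeneralPosition fun i => signedVec u (σ i, e i) := by
  intro t ht
  have h : tupleDet (fun i => signedVec u (σ i, e i)) t =
      tupleDet (signedVec u) fun j => (σ (t j), e (t j)) := rfl
  rw [h, tupleDet_signedVec]
  exact mul_ne_zero (Finset.prod_ne_zero_iff.2 fun j _ => by simp) (hu _ (σ.injective.comp ht))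

theorem exists_perm_of_antipodalIso (hv : Injective (signedVec v))
    (h : AntipodalIso m (Set.range (signedVec v)) (Set.range (signedVec u))) :
    ∃ (σ : Equiv.Perm (Fin n)) (e : Fin n → ℤˣ),
      SameCones v fun i => signedVec u (σ i, e i) := by
  obtain ⟨f, hf, hneg, hcone⟩ := h
  choose q hq using fun i : Fin n => hf.mapsTo (Set.mem_range_self (f := signedVec v) (i, 1))
  have hfq : ∀ p, f (signedVec v p) = signedVec (fun i => signedVec u (q i)) p := by
    rintro ⟨i, s⟩
    rcases Int.units_eq_one_or s with rfl | rfl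
    · rw [← hq]; simp [signedVec]
    · rw [signedVec_neg, hneg _ (Set.mem_range_self _), ← hq, signedVec_neg]; simp [signedVec]
  have hinj : Injective fun i => (q i).1 := by
    intro i k hik
    have hik : (q i).1 = (q k).1 := hik
    have hfeq : f (signedVec v (i, (q i).2)) = f (signedVec v (k, (q k).2)) := by
      rw [hfq, hfq]
      simp [signedVec, smul_smul, unit_mul_self_real, hik]
    exact congrArg Prod.fst
      (hv (hf.injOn (Set.mem_range_self _) (Set.mem_range_self _) hfeq))
  refine ⟨Equiv.ofBijective _ (Finite.injective_iff_bijective.1 hinj), fun i => (q i).2, ?_⟩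
  intro p hp a b ha hb
  refine hcone (fun k => signedVec v (p k)) (fun x y hxy => hp (congrArg Prod.fst (hv hxy)))
    (fun k => Set.mem_range_self _) (fun k l hkl => ?_) a b ha ?_
  · rw [← signedVec_neg v (p l).1 (p l).2] at hkl
    have hpkl := hv hkl
    obtain rfl : k = l := hp (by simpa using congrArg Prod.fst hpkl)
    exact units_ne_neg_self (p k).2 (congrArg Prod.snd hpkl)
  · simp only [hfq]
    exact hb

theorem antipodalIso_of_sameCones (hv : Injective (signedVec v)) (hw : Injective (signedVec w))
    (h : SameCones v w) :
    AntipodalIso m (Set.range (signedVec v)) (Set.range (signedVec w)) := by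
  have hf : ∀ p, extend (signedVec v) (signedVec w) 0 (signedVec v p) = signedVec w p :=
    fun p => hv.extend_apply _ _ p
  refine ⟨extend (signedVec v) (signedVec w) 0, ⟨?_, ?_, ?_⟩, ?_, ?_⟩
  · rintro _ ⟨p, rfl⟩
    exact ⟨p, (hf p).symm⟩
  · rintro _ ⟨p, rfl⟩ _ ⟨p', rfl⟩ hpp
    rw [hf, hf] at hpp
    rw [hw hpp]
  · rintro _ ⟨p, rfl⟩
    exact ⟨_, ⟨p, rfl⟩, hf p⟩
  · rintro _ ⟨⟨i, s⟩, rfl⟩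
    rw [← signedVec_neg, hf, hf, signedVec_neg]
  · intro c hc hcS hcneg a b ha hb
    choose p hp using hcS
    obtain rfl : (fun k => signedVec v (p k)) = c := funext hp
    simp only [hf] at ha hb
    refine h p (fun k l hkl => ?_) a b ha hb
    by_contra hne
    have hs : (p k).2 = (p l).2 ∨ (p k).2 = -(p l).2 := by
      rcases Int.units_eq_one_or (p k).2 with h₁ | h₁ <;>
        rcases Int.units_eq_one_or (p l).2 with h₂ | h₂ <;> simp [h₁, h₂]
    rcases hs with hs | hs
    · exact hne (hc (congrArg (signedVec v) (Prod.ext hkl hs)))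
    · refine hcneg k l ?_
      rw [← signedVec_neg v (p l).1 (p l).2]
      exact congrArg (signedVec v) (Prod.ext hkl hs)

theorem antipodalSet_eq_range_signedVec (M : Matrix (Fin m) (Fin n) ℝ) :
    antipodalSet M = Set.range (signedVec M.col) := by
  ext x
  constructor
  · rintro (⟨i, rfl⟩ | ⟨i, rfl⟩)
    · exact ⟨(i, 1), by ext; simp [signedVec]⟩
    · exact ⟨(i, -1), by ext; simp [signedVec]⟩
  · rintro ⟨⟨i, s⟩, rfl⟩
    rcases Int.units_eq_one_or s with rfl | rfl
    · exact Or.inl ⟨i, by ext; simp [signedVec]⟩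
    · exact Or.inr ⟨i, by ext; simp [signedVec]⟩

theorem maxMinor_eq_tupleDet (M : Matrix (Fin m) (Fin n) ℝ) (I : Finset (Fin n))
    (hI : I.card = m) : maxMinor M I hI = tupleDet M.col (I.orderEmbOfFin hI) := by
  rw [maxMinor, ← Matrix.det_transpose]
  rfl

/-- Every injective tuple is a permutation of the increasing enumeration of its range. -/
theorem exists_orderEmbOfFin_comp_perm {t : Fin m → Fin n} (ht : Injective t) :
    ∃ (I : Finset (Fin n)) (hI : I.card = m) (π : Equiv.Perm (Fin m)),
      t = I.orderEmbOfFin hI ∘ π := by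
  have hI : (Finset.univ.image t).card = m := by simp [Finset.card_image_of_injective _ ht]
  refine ⟨_, hI, exists_perm_of_range_subset ht fun j => ?_⟩
  have : t j ∈ Set.range ((Finset.univ.image t).orderEmbOfFin hI) := by
    rw [Finset.range_orderEmbOfFin]; simp
  exact this

theorem TNZMat.generalPosition {M : Matrix (Fin m) (Fin n) ℝ} (hM : TNZMat M) :
    GeneralPosition M.col := by
  intro t ht
  obtain ⟨I, hI, π, rfl⟩ := exists_orderEmbOfFin_comp_perm ht
  rw [tupleDet_comp_perm, ← maxMinor_eq_tupleDet]
  exact mul_ne_zero (by simp) (hM I hI)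

end Arrangement

theorem sign_eq_mul_sign_iff {δ x y : ℝ} (hδ : δ = 1 ∨ δ = -1) (hx : x ≠ 0) (hy : y ≠ 0) :
    Real.sign x = δ * Real.sign y ↔ 0 < δ * (x * y) := by
  rcases hδ with rfl | rfl <;> rcases hx.lt_or_gt with hx | hx <;>
    rcases hy.lt_or_gt with hy | hy <;>
    simp only [Real.sign_of_pos, Real.sign_of_neg, hx, hy] <;> norm_num <;> nlinarith

/-- Agreement of the signs of all maximal minors is agreement of the signs of `tupleDet`. -/
theorem forall_sign_maxMinor_iff {m n : ℕ} {M N : Matrix (Fin m) (Fin n) ℝ}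
    (hM : GeneralPosition M.col) (hN : GeneralPosition N.col) {δ : ℝ} (hδ : δ = 1 ∨ δ = -1) :
    (∀ (I : Finset (Fin n)) (hI : I.card = m),
      Real.sign (maxMinor M I hI) = δ * Real.sign (maxMinor N I hI)) ↔
    ∀ t, Injective t → 0 < δ * (tupleDet M.col t * tupleDet N.col t) := by
  have key (I : Finset (Fin n)) (hI : I.card = m) :=
    sign_eq_mul_sign_iff hδ (hM _ (I.orderEmbOfFin hI).injective)
      (hN _ (I.orderEmbOfFin hI).injective)
  simp only [maxMinor_eq_tupleDet, key]
  refine ⟨fun h t ht => ?_, fun h I hI => h _ (I.orderEmbOfFin hI).injective⟩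
  obtain ⟨I, hI, π, rfl⟩ := exists_orderEmbOfFin_comp_perm ht
  exact (tupleDet_comp_perm_mul_pos_iff δ _ π).2 (h I hI)

/-- for `M, N ∈ Mat^{tnz}_{mn}(ℝ)` with `n ≥ m ≥ 2`, the antipodal arrangements
`{±v_i}` and `{±w_i}` are isomorphic iff there are a permutation `σ`, columnwise signs `ε`,
and a global sign `δ` such that all maximal minors of `M` and of `N'` (the matrix with `i`-th
column `ε i • w (σ i)`) have matching signs up to `δ`. -/
theorem stmt_7 (m n : ℕ) (hm : 2 ≤ m) (hmn : m ≤ n)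
    (M N : Matrix (Fin m) (Fin n) ℝ) (hM : TNZMat M) (hN : TNZMat N) :
    AntipodalIso m (antipodalSet M) (antipodalSet N) ↔
      ∃ σ : Equiv.Perm (Fin n), ∃ ε : Fin n → ℝ, (∀ i, ε i = 1 ∨ ε i = -1) ∧
        ∃ δ : ℝ, (δ = 1 ∨ δ = -1) ∧
          ∀ (I : Finset (Fin n)) (hI : I.card = m),
            Real.sign (maxMinor M I hI) =
              δ * Real.sign (maxMinor (Matrix.of fun k i => ε i * N k (σ i)) I hI) := by
  have hv := hM.generalPosition
  have hu := hN.generalPosition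
  have hcol (σ : Equiv.Perm (Fin n)) (e : Fin n → ℤˣ) :
      (Matrix.of fun k i => ((e i : ℤ) : ℝ) * N k (σ i) : Matrix (Fin m) (Fin n) ℝ).col =
        fun i => signedVec N.col (σ i, e i) := rfl
  rw [antipodalSet_eq_range_signedVec, antipodalSet_eq_range_signedVec]
  constructor
  · intro h
    obtain ⟨σ, e, hcones⟩ := exists_perm_of_antipodalIso (hv.signedVec_injective hm hmn) h
    have hw := hu.signedVec_comp_perm σ e
    obtain ⟨δ, hδ, hsign⟩ := hcones.exists_sign hv hw (Fin.castLE_injective hmn)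
    refine ⟨σ, fun i => ((e i : ℤ) : ℝ), fun i => ?_, δ, hδ, ?_⟩
    · rcases Int.units_eq_one_or (e i) with h | h <;> simp [h]
    · exact (forall_sign_maxMinor_iff hv (hcol σ e ▸ hw) hδ).2 (hcol σ e ▸ hsign)
  · rintro ⟨σ, ε, hε, δ, hδ, hsign⟩
    obtain ⟨e, rfl⟩ : ∃ e : Fin n → ℤˣ, ε = fun i => ((e i : ℤ) : ℝ) := by
      have : ∀ i, ∃ s : ℤˣ, ε i = ((s : ℤ) : ℝ) := fun i => by
        rcases hε i with h | h
        · exact ⟨1, by simp [h]⟩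
        · exact ⟨-1, by simp [h]⟩
      choose e he using this
      exact ⟨e, funext he⟩
    have hw := hu.signedVec_comp_perm σ e
    have hcones := sameCones_of_sign ((forall_sign_maxMinor_iff hv (hcol σ e ▸ hw) hδ).1 hsign)
    rw [hcol] at hcones
    rw [← range_signedVec_signedVec N.col σ e]
    exact antipodalIso_of_sameCones (hv.signedVec_injective hm hmn)
      (hw.signedVec_injective hm hmn) hcones
end

section
/- Let n ≥ 1. The map ζ is a permutation of {1,−1}^n of order exactly 2n, and the number of orbits of the cyclic group generated by ζ acting on {1,−1}^n (equivalently, the number of equivalence classes of {1,−1}^n under the relation d ∼ e iff e = ζ^i(d) for some i ≥ 0) equals (1/(2n))·Σ_{k ∣ n, k odd} φ(k)·2^{n/k}, where φ is the Euler totient function. -/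
/-- The signed cyclic shift `ζ` on `{±1}^n`: `(ζ d)_0 = -d_{n-1}` and `(ζ d)_k = d_{k-1}`
for `k ≥ 1` (0-based indexing). -/
def zeta (n : ℕ) (d : Fin n → ℤˣ) : Fin n → ℤˣ := fun k =>
  if (k : ℕ) = 0 then -d ⟨n - 1, Nat.sub_lt k.pos Nat.one_pos⟩
  else d ⟨(k : ℕ) - 1, Nat.lt_of_le_of_lt (Nat.sub_le _ _) k.isLt⟩

open Function

/-- The extension of `d : Fin n → ℤˣ` to an `n`-antiperiodic function on `ℤ`. -/
def antiperiodicExtension (n : ℕ) [NeZero n] (d : Fin n → ℤˣ) (x : ℤ) : ℤˣ :=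
  (x / n).negOnePow * d ⟨(x % n).toNat, by
    have hn : (0 : ℤ) < n := by exact_mod_cast NeZero.pos n
    have := Int.emod_nonneg x hn.ne'
    have := Int.emod_lt_of_pos x hn
    omega⟩

theorem antiperiodic_antiperiodicExtension (n : ℕ) [NeZero n] (d : Fin n → ℤˣ) :
    Antiperiodic (antiperiodicExtension n d) (n : ℤ) := by
  intro x
  have hn : (n : ℤ) ≠ 0 := by exact_mod_cast NeZero.ne n
  simp [antiperiodicExtension, Int.add_ediv_of_dvd_right, Int.ediv_self hn, Int.negOnePow_succ]

theorem antiperiodicExtension_natCast (n : ℕ) [NeZero n] (d : Fin n → ℤˣ) (k : Fin n) :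
    antiperiodicExtension n d (k : ℕ) = d k := by
  have h : ((k : ℕ) : ℤ) / n = 0 := by exact_mod_cast Nat.div_eq_of_lt k.isLt
  have h' : (((k : ℕ) : ℤ) % n).toNat = k := by
    rw [← Int.natCast_mod, Int.toNat_natCast, Nat.mod_eq_of_lt k.isLt]
  simp [antiperiodicExtension, h, h']

/-- An `n`-antiperiodic function on `ℤ` is determined by its values at `0, …, n - 1`. -/
theorem Function.Antiperiodic.eq_of_forall_fin {n : ℕ} [NeZero n] {f g : ℤ → ℤˣ}
    (hf : Antiperiodic f (n : ℤ)) (hg : Antiperiodic g (n : ℤ))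
    (h : ∀ k : Fin n, f (k : ℕ) = g (k : ℕ)) : f = g := by
  have hn : (0 : ℤ) < n := by exact_mod_cast NeZero.pos n
  have hper : Periodic (fun x => f x / g x) (n : ℤ) := fun x => by simp [hf x, hg x]
  funext x
  have h₁ := hper.sub_int_mul_eq (x := x) (x / n)
  have h₂ : x - x / n * n = ((x % n).toNat : ℕ) := by
    rw [Int.toNat_of_nonneg (Int.emod_nonneg x hn.ne'), Int.emod_def, mul_comm]
  have h₃ : (x % n).toNat < n := by
    have := Int.emod_nonneg x hn.ne'
    have := Int.emod_lt_of_pos x hn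
    omega
  have h₄ : f ((x % n).toNat : ℕ) = g ((x % n).toNat : ℕ) := h ⟨_, h₃⟩
  simp only [Int.cast_id, h₂, h₄, div_self'] at h₁
  exact div_eq_one.mp h₁.symm

/-- Sign vectors of length `n` correspond to `n`-antiperiodic functions `ℤ → ℤˣ`. -/
def antiperiodicEquiv (n : ℕ) [NeZero n] :
    (Fin n → ℤˣ) ≃ {f : ℤ → ℤˣ // Antiperiodic f (n : ℤ)} where
  toFun d := ⟨antiperiodicExtension n d, antiperiodic_antiperiodicExtension n d⟩
  invFun f k := f.1 (k : ℕ)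
  left_inv d := funext fun k => antiperiodicExtension_natCast n d k
  right_inv f := Subtype.ext <|
    (antiperiodic_antiperiodicExtension n _).eq_of_forall_fin f.2 fun k =>
      antiperiodicExtension_natCast n _ k

theorem antiperiodicExtension_injective (n : ℕ) [NeZero n] :
    Injective (antiperiodicExtension n) := fun _ _ h =>
  (antiperiodicEquiv n).injective (Subtype.ext h)

theorem card_antiperiodic (n : ℕ) [NeZero n] :
    Nat.card {f : ℤ → ℤˣ // Antiperiodic f (n : ℤ)} = 2 ^ n := by
  rw [← Nat.card_congr (antiperiodicEquiv n)]
  simp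

theorem antiperiodicExtension_zeta (n : ℕ) [NeZero n] (d : Fin n → ℤˣ) :
    antiperiodicExtension n (zeta n d) = fun x => antiperiodicExtension n d (x - 1) := by
  have hd := antiperiodic_antiperiodicExtension n d
  refine (antiperiodic_antiperiodicExtension n _).eq_of_forall_fin (hd.sub_const 1) fun k => ?_
  have hn := NeZero.pos n
  rw [antiperiodicExtension_natCast, zeta]
  split_ifs with hk
  · rw [← antiperiodicExtension_natCast n d, ← hd.sub_eq]
    congr 1
    push_cast [hk, Nat.one_le_iff_ne_zero.mpr hn.ne']
    ring
  · rw [← antiperiodicExtension_natCast n d]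
    congr 1
    push_cast [Nat.one_le_iff_ne_zero.mpr hk]
    ring

theorem antiperiodicExtension_zeta_iterate (n : ℕ) [NeZero n] (d : Fin n → ℤˣ) (j : ℕ) :
    antiperiodicExtension n ((zeta n)^[j] d) = fun x => antiperiodicExtension n d (x - j) := by
  induction j with
  | zero => simp
  | succ j ih =>
    rw [iterate_succ_apply', antiperiodicExtension_zeta, ih]
    funext x
    push_cast
    ring_nf

theorem zeta_iterate_eq_self_iff (n : ℕ) [NeZero n] (d : Fin n → ℤˣ) (j : ℕ) :
    (zeta n)^[j] d = d ↔ Periodic (antiperiodicExtension n d) (j : ℤ) := by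
  rw [← (antiperiodicExtension_injective n).eq_iff, antiperiodicExtension_zeta_iterate]
  refine ⟨fun h x => ?_, fun h => funext fun x => h.sub_eq x⟩
  simpa using (congrFun h (x + j)).symm

theorem Function.Periodic.gcd {α : Type*} {f : ℤ → α} {a b : ℕ} (ha : Periodic f (a : ℤ))
    (hb : Periodic f (b : ℤ)) : Periodic f (a.gcd b : ℤ) := by
  rw [Nat.gcd_eq_gcd_ab, mul_comm (a : ℤ), mul_comm (b : ℤ)]
  exact (ha.int_mul _).add_period (hb.int_mul _)

theorem not_periodic_of_dvd_of_antiperiodic {f : ℤ → ℤˣ} {n g : ℕ} (hf : Antiperiodic f (n : ℤ))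
    (hg : g ∣ n) : ¬ Periodic f (g : ℤ) := by
  intro hper
  obtain ⟨k, rfl⟩ := hg
  have h₁ := (hper.nat_mul k) 0
  have h₂ := hf 0
  rw [Nat.cast_mul, mul_comm, h₁] at h₂
  exact units_ne_neg_self _ h₂

theorem periodic_two_mul_and_antiperiodic_iff {f : ℤ → ℤˣ} {h k : ℕ} (hk : Odd k) :
    Periodic f ((2 * h : ℕ) : ℤ) ∧ Antiperiodic f ((h * k : ℕ) : ℤ) ↔
      Antiperiodic f (h : ℤ) := by
  obtain ⟨m, rfl⟩ := hk
  constructor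
  · rintro ⟨hp, ha⟩
    have hc : (h : ℤ) = -(m * (2 * h : ℕ)) + (h * (2 * m + 1) : ℕ) := by
      push_cast
      ring
    rw [hc]
    exact (hp.nat_mul m).neg.add_antiperiod ha
  · intro ha
    refine ⟨by simpa using ha.periodic_two_mul, ?_⟩
    have hc : ((h * (2 * m + 1) : ℕ) : ℤ) = m * (2 * h) + h := by
      push_cast
      ring
    rw [hc]
    exact ha.nat_odd_mul_antiperiodic m

theorem card_fixedPoints_zeta_iterate (n : ℕ) [NeZero n] (j : ℕ) :
    Nat.card {d // (zeta n)^[j] d = d} =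
      if Odd (2 * n / (2 * n).gcd j) then 2 ^ (n / (2 * n / (2 * n).gcd j)) else 0 := by
  have hn := NeZero.pos n
  set g := (2 * n).gcd j
  have hiff : ∀ f : {f : ℤ → ℤˣ // Antiperiodic f (n : ℤ)},
      Periodic f.1 (j : ℤ) ↔ Periodic f.1 (g : ℤ) := fun f => by
    refine ⟨fun h => Periodic.gcd (by simpa using f.2.periodic_two_mul) h, fun h => ?_⟩
    obtain ⟨m, hm⟩ : g ∣ j := Nat.gcd_dvd_right _ _
    rw [hm, Nat.cast_mul, mul_comm]
    exact h.nat_mul m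
  have e : {d // (zeta n)^[j] d = d} ≃
      {f : {f : ℤ → ℤˣ // Antiperiodic f (n : ℤ)} // Periodic f.1 (g : ℤ)} :=
    (antiperiodicEquiv n).subtypeEquiv fun d =>
      (zeta_iterate_eq_self_iff n d j).trans (hiff (antiperiodicEquiv n d))
  rw [Nat.card_congr e]
  obtain ⟨k, hk⟩ : g ∣ 2 * n := Nat.gcd_dvd_left _ _
  have hg0 : 0 < g := Nat.gcd_pos_of_pos_left _ (by omega)
  rw [hk, Nat.mul_div_cancel_left _ hg0]
  clear_value g
  split_ifs with hodd
  · obtain ⟨h, rfl⟩ : 2 ∣ g :=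
      (Nat.Coprime.dvd_mul_right (Nat.coprime_two_left.mpr hodd)).mp ⟨n, hk.symm⟩
    obtain rfl : n = h * k := by
      rw [mul_assoc] at hk
      omega
    have : NeZero h := ⟨by omega⟩
    rw [Nat.mul_div_cancel _ hodd.pos, ← card_antiperiodic h]
    exact Nat.card_congr <| (Equiv.subtypeSubtypeEquivSubtypeInter _ _).trans <|
      Equiv.subtypeEquivRight fun f => and_comm.trans (periodic_two_mul_and_antiperiodic_iff hodd)
  · obtain ⟨m, rfl⟩ := even_iff_two_dvd.mp (Nat.not_odd_iff_even.mp hodd)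
    have : g ∣ n := ⟨m, by rw [mul_left_comm] at hk; omega⟩
    rw [Nat.card_eq_zero]
    exact .inl ⟨fun f => not_periodic_of_dvd_of_antiperiodic f.1.2 this f.2⟩

theorem zeta_iterate_two_mul (n : ℕ) [NeZero n] : (zeta n)^[2 * n] = id := by
  funext d
  refine (zeta_iterate_eq_self_iff n d _).mpr ?_
  simpa using (antiperiodic_antiperiodicExtension n d).periodic_two_mul

theorem zeta_iterate_ne_id (n : ℕ) [NeZero n] {j : ℕ} (hj : 0 < j) (hjn : j < 2 * n) :
    (zeta n)^[j] ≠ id := by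
  intro h
  have hcard := card_fixedPoints_zeta_iterate n j
  have hall : Nat.card {d // (zeta n)^[j] d = d} = 2 ^ n := by
    simp [h]
  rw [hall] at hcard
  obtain ⟨k, hk⟩ := Nat.gcd_dvd_left (2 * n) j
  have hg0 : 0 < (2 * n).gcd j := Nat.gcd_pos_of_pos_right _ hj
  have hgj : (2 * n).gcd j ≤ j := Nat.gcd_le_right _ hj
  have hk1 : 1 < k := by
    by_contra! hk1
    have : (2 * n).gcd j * k ≤ (2 * n).gcd j * 1 := Nat.mul_le_mul_left _ hk1
    omega
  have hquot : 2 * n / (2 * n).gcd j = k :=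
    Nat.div_eq_of_eq_mul_right hg0 hk
  rw [hquot] at hcard
  split_ifs at hcard
  · exact (Nat.div_lt_self (NeZero.pos n) hk1).ne' (Nat.pow_right_injective le_rfl hcard)
  · simp at hcard

theorem zeta_bijective (n : ℕ) [NeZero n] : Bijective (zeta n) := by
  refine Finite.injective_iff_bijective.mp ?_
  have h : Injective ((zeta n)^[2 * n - 1] ∘ zeta n) := by
    rw [← iterate_succ, Nat.succ_eq_add_one, Nat.sub_add_cancel (by have := NeZero.pos n; omega),
      zeta_iterate_two_mul]
    exact injective_id
  exact h.of_comp

/-- **Burnside's lemma** for the cyclic group generated by a permutation. -/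
theorem Equiv.Perm.card_quot_mul_orderOf {α : Type*} [Finite α] (σ : Equiv.Perm α) :
    Nat.card (Quot fun a b : α => ∃ i : ℕ, b = (σ ^ i) a) * orderOf σ =
      ∑ j ∈ Finset.range (orderOf σ), Nat.card {a // (σ ^ j) a = a} := by
  classical
  have := Fintype.ofFinite α
  have e : Quot (fun a b : α => ∃ i : ℕ, b = (σ ^ i) a) ≃
      MulAction.orbitRel.Quotient (Subgroup.zpowers σ) α := by
    refine Quot.congrRight fun a b => ?_
    change _ ↔ a ∈ MulAction.orbit (Subgroup.zpowers σ) b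
    rw [MulAction.mem_orbit_symm]
    constructor
    · rintro ⟨i, rfl⟩
      exact ⟨⟨σ ^ i, i, zpow_natCast σ i⟩, rfl⟩
    · rintro ⟨⟨_, hg⟩, rfl⟩
      obtain ⟨i, rfl⟩ := mem_powers_iff_mem_zpowers.mpr hg
      exact ⟨i, rfl⟩
  have key := MulAction.sum_card_fixedBy_eq_card_orbits_mul_card_group (Subgroup.zpowers σ) α
  rw [Fintype.card_zpowers, ← Nat.card_eq_fintype_card, ← Nat.card_congr e] at key
  rw [← key, ← Fin.sum_univ_eq_sum_range (fun j => Nat.card {a // (σ ^ j) a = a}),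
    ← (finEquivZPowers (isOfFinOrder_of_finite σ)).sum_comp]
  refine Finset.sum_congr rfl fun j _ => ?_
  rw [← Nat.card_eq_fintype_card]
  rfl

theorem sum_range_gcd_eq_sum_divisors {N : ℕ} (hN : N ≠ 0) (F : ℕ → ℕ) :
    ∑ j ∈ Finset.range N, F (N / N.gcd j) = ∑ k ∈ N.divisors, k.totient * F k := by
  rw [← Nat.sum_div_divisors,
    ← Finset.sum_fiberwise_of_maps_to (t := N.divisors) (g := fun j => N.gcd j)
      (fun j _ => Nat.mem_divisors.mpr ⟨Nat.gcd_dvd_left _ _, hN⟩)]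
  refine Finset.sum_congr rfl fun d hd => ?_
  rw [Nat.totient_div_of_dvd (Nat.dvd_of_mem_divisors hd), ← smul_eq_mul, ← Finset.sum_const]
  refine Finset.sum_congr rfl fun j hj => ?_
  rw [(Finset.mem_filter.mp hj).2]

theorem card_quot_zeta_mul (n : ℕ) [NeZero n] :
    Nat.card (Quot fun d e : Fin n → ℤˣ => ∃ i : ℕ, e = (zeta n)^[i] d) * (2 * n) =
      ∑ k ∈ n.divisors with Odd k, k.totient * 2 ^ (n / k) := by
  have hn := NeZero.pos n
  let σ : Equiv.Perm (Fin n → ℤˣ) := Equiv.ofBijective (zeta n) (zeta_bijective n)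
  have hσ : ∀ j : ℕ, ⇑(σ ^ j) = (zeta n)^[j] := fun j => Equiv.Perm.coe_pow σ j
  have hord : orderOf σ = 2 * n := by
    refine (orderOf_eq_iff (by omega)).mpr ⟨?_, fun j hj hj0 h => ?_⟩
    · exact DFunLike.coe_injective ((hσ _).trans (zeta_iterate_two_mul n))
    · exact zeta_iterate_ne_id n hj0 hj ((hσ j).symm.trans (congrArg _ h))
  have key := σ.card_quot_mul_orderOf
  simp only [hσ, hord, card_fixedPoints_zeta_iterate] at key
  rw [key, sum_range_gcd_eq_sum_divisors (by omega) fun k => if Odd k then 2 ^ (n / k) else 0]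
  simp only [mul_ite, mul_zero]
  rw [← Finset.sum_filter]
  refine Finset.sum_congr (Finset.ext fun k => ?_) fun _ _ => rfl
  simp only [Finset.mem_filter, Nat.mem_divisors]
  refine and_congr_left fun hk => ?_
  rw [(Nat.coprime_two_right.mpr hk).dvd_mul_left]
  simp [hn.ne']

/-- `ζ` is a permutation of `{±1}^n` of order exactly `2n`, and the number of
orbits of the cyclic group `⟨ζ⟩` on `{±1}^n` equals
`(1/(2n)) · Σ_{k ∣ n, k odd} φ(k) · 2^(n/k)`. -/
theorem stmt_12 (n : ℕ) (hn : 1 ≤ n) :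
    Function.Bijective (zeta n) ∧
    (zeta n)^[2 * n] = id ∧
    (∀ j : ℕ, 0 < j → j < 2 * n → (zeta n)^[j] ≠ id) ∧
    (Nat.card (Quot fun d e : Fin n → ℤˣ => ∃ i : ℕ, e = (zeta n)^[i] d) : ℚ) =
      (1 / (2 * n)) * ∑ k ∈ (Nat.divisors n).filter (fun k => Odd k),
        (Nat.totient k : ℚ) * 2 ^ (n / k) := by
  have : NeZero n := ⟨by omega⟩
  refine ⟨zeta_bijective n, zeta_iterate_two_mul n, fun j => zeta_iterate_ne_id n, ?_⟩
  have key : _ = _ := congrArg (Nat.cast : ℕ → ℚ) (card_quot_zeta_mul n)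
  push_cast at key
  have hn0 : (n : ℚ) ≠ 0 := by exact_mod_cast NeZero.ne n
  rw [← key]
  field_simp
end
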